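/- There is a constant C > 0 depending only on L and the quasi-uniformity constants C₁, C₂ such that for every quasi-uniform partition of Γ and every piecewise constant σ ∈ M, ‖σ‖_{L²(0,L)} ≤ C h^{−1} ‖σ‖_{H^{−1}(Γ)}, where h = max_i l_i. -/

import Mathlib

open MeasureTheory

/-- The set of numbers `|∫₀^L σ \overline{θ} ds|` where `θ` ranges over the unit ball of
`H¹(Γ)` (`L`-periodic, locally absolutely continuous with derivative `θ'`, `θ, θ' ∈ L²(0,L)`,
`‖θ‖²_{H¹} = ∫₀^L (|θ|² + |θ'|²) ≤ 1`), and `σ` is the piecewise constant with values `c`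
on the partition `x`, so that `∫₀^L σ \overline{θ} = ∑ i, c_i ∫_{τ_i} \overline{θ}`.
The supremum of this set is the dual norm `‖σ‖_{H^{−1}(Γ)}`. -/
def Hm1Set (L : ℝ) {N : ℕ} (x : Fin (N + 1) → ℝ) (c : Fin N → ℂ) : Set ℝ :=
  { r | ∃ θ θ' : ℝ → ℂ,
      (∀ s, θ (s + L) = θ s) ∧
      (∀ a b : ℝ, a ≤ b → θ b = θ a + ∫ t in a..b, θ' t) ∧
      MemLp θ 2 (volume.restrict (Set.Ioo 0 L)) ∧
      MemLp θ' 2 (volume.restrict (Set.Ioo 0 L)) ∧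
      (∫ s in (0:ℝ)..L, (‖θ s‖ ^ 2 + ‖θ' s‖ ^ 2)) ≤ 1 ∧
      r = ‖∑ i : Fin N, c i * ∫ s in (x i.castSucc)..(x i.succ), (starRingEnd ℂ) (θ s)‖ }

/-!
Pair the piecewise constant `σ`, with values `c i` on elements of length `l i`, with the bubble
function `u` equal to `c i (s - x i) (x (i + 1) - s)` on the `i`-th element. It vanishes at the
nodes, so it extends to an `L`-periodic `H¹` function, and with `W = ∑ |c i|² (l i)³` one has
`∫ σ ū = W / 6` and `∫ |u|² + |u'|² = ∑ |c i|² ((l i)⁵ / 30 + (l i)³ / 3) ≤ (L² / 30 + 1 / 3) W`.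
Duality gives the mesh-weighted inequality `√W ≤ 6 √(L² / 30 + 1 / 3) ‖σ‖_{H⁻¹}` on every
partition, and `W ≥ δ² ‖σ‖²_{L²}` as soon as all elements have length at least `δ`.
-/

open Set

section Partition

lemma pairwise_disjoint_Ico_castSucc_succ {α : Type*} [Preorder α] {N : ℕ} {x : Fin (N + 1) → α}
    (hx : Monotone x) :
    Pairwise (Function.onFun Disjoint fun i : Fin N => Ico (x i.castSucc) (x i.succ)) :=
  fun i j hij => by
    simpa only [Function.onFun, Fin.orderSucc_castSucc] using
      hx.pairwise_disjoint_on_Ico_succ ((Fin.castSucc_injective N).ne hij)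

lemma sum_eq_of_mem_Ico_castSucc_succ {α M : Type*} [Preorder α] [AddCommMonoid M] {N : ℕ}
    {x : Fin (N + 1) → α} (hx : Monotone x) {F : Fin N → M} {s : α}
    (hF : ∀ j, s ∉ Ico (x j.castSucc) (x j.succ) → F j = 0)
    {i : Fin N} (hs : s ∈ Ico (x i.castSucc) (x i.succ)) : ∑ j, F j = F i :=
  Finset.sum_eq_single_of_mem i (Finset.mem_univ i) fun j _ hji =>
    hF j (disjoint_right.1 (pairwise_disjoint_Ico_castSucc_succ hx hji) hs)

lemma sum_integral_castSucc_succ {E : Type*} [NormedAddCommGroup E] [NormedSpace ℝ E]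
    {N : ℕ} {x : Fin (N + 1) → ℝ} {μ : Measure ℝ} {f : ℝ → E}
    (hf : ∀ i : Fin N, IntervalIntegrable f μ (x i.castSucc) (x i.succ)) :
    ∑ i : Fin N, ∫ s in x i.castSucc..x i.succ, f s ∂μ =
      ∫ s in x 0..x (Fin.last N), f s ∂μ := by
  let node (k : ℕ) : ℝ := x (Fin.ofNat (N + 1) k)
  have node_castSucc (i : Fin N) : node i = x i.castSucc :=
    congrArg x (Fin.ext (Nat.mod_eq_of_lt (by omega)))
  have node_succ (i : Fin N) : node (i + 1) = x i.succ :=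
    congrArg x (Fin.ext (Nat.mod_eq_of_lt (by simp)))
  have node_last : node N = x (Fin.last N) :=
    congrArg x (Fin.ext (Nat.mod_eq_of_lt (by simp)))
  calc ∑ i : Fin N, ∫ s in x i.castSucc..x i.succ, f s ∂μ
      = ∑ i : Fin N, ∫ s in node i..node (i + 1), f s ∂μ := by
        simp only [node_castSucc, node_succ]
    _ = ∑ k ∈ Finset.range N, ∫ s in node k..node (k + 1), f s ∂μ :=
        Fin.sum_univ_eq_sum_range (fun k => ∫ s in node k..node (k + 1), f s ∂μ) N
    _ = ∫ s in node 0..node N, f s ∂μ :=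
        intervalIntegral.sum_integral_adjacent_intervals fun k hk => by
          simpa only [← node_castSucc, ← node_succ] using hf ⟨k, hk⟩
    _ = ∫ s in x 0..x (Fin.last N), f s ∂μ := by rw [node_last]; rfl

end Partition

section PeriodicExtension

lemma exists_periodic_extension {E : Type*} [NormedAddCommGroup E] [NormedSpace ℝ E]
    {L : ℝ} (hL : 0 < L) {u u' : ℝ → E} (hu' : IntervalIntegrable u' volume 0 L)
    (hu : ∀ t ∈ Icc 0 L, u t = u 0 + ∫ s in 0..t, u' s) (hu_end : u L = u 0) :
    ∃ θ θ' : ℝ → E, Function.Periodic θ L ∧ Continuous θ ∧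
      (∀ a b, θ b = θ a + ∫ s in a..b, θ' s) ∧ EqOn θ u (Icc 0 L) ∧ EqOn θ' u' (Ico 0 L) := by
  let θ' : ℝ → E := fun s => u' (toIcoMod hL 0 s)
  have θ'_periodic : Function.Periodic θ' L := (toIcoMod_periodic hL 0).comp u'
  have θ'_eq : EqOn θ' u' (Ico 0 L) := fun s hs =>
    congrArg u' ((toIcoMod_eq_self hL).2 (by rwa [zero_add]))
  have θ'_int (a b : ℝ) : IntervalIntegrable θ' volume a b :=
    θ'_periodic.intervalIntegrable₀ hL.ne' (IntervalIntegrable.congr_uIoo hu' <| by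
      rw [uIoo_of_le hL.le]
      exact (θ'_eq.mono Ioo_subset_Ico_self).symm) a b
  have integral_θ' {t : ℝ} (ht : t ∈ Icc 0 L) : u 0 + ∫ s in 0..t, θ' s = u t := by
    rw [hu t ht, intervalIntegral.integral_congr_Ioo_of_le ht.1
      fun s hs => θ'_eq ⟨hs.1.le, hs.2.trans_le ht.2⟩]
  have integral_period : ∫ s in 0..L, θ' s = 0 := by
    simpa [hu_end] using integral_θ' (right_mem_Icc.2 hL.le)
  refine ⟨fun t => u 0 + ∫ s in 0..t, θ' s, θ', fun t => ?_,
    continuous_const.add (intervalIntegral.continuous_primitive θ'_int 0), fun a b => ?_,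
    fun t ht => integral_θ' ht, θ'_eq⟩
  · have shift : ∫ s in t..t + L, θ' s = 0 := by
      rw [θ'_periodic.intervalIntegral_add_eq t 0, zero_add, integral_period]
    simp only [← intervalIntegral.integral_add_adjacent_intervals (θ'_int 0 t) (θ'_int t (t + L)),
      shift, add_zero]
  · rw [add_assoc, intervalIntegral.integral_add_adjacent_intervals (θ'_int 0 a) (θ'_int a b)]

lemma norm_sum_integral_conj_mem_Hm1Set {L : ℝ} (hL : 0 < L) {N : ℕ} {x : Fin (N + 1) → ℝ}
    (hx : Monotone x) (hx_zero : x 0 = 0) (hx_last : x (Fin.last N) = L) (c : Fin N → ℂ)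
    {u u' : ℝ → ℂ} (hu' : MemLp u' 2 (volume.restrict (Ioo 0 L)))
    (hu : ∀ t ∈ Icc 0 L, u t = u 0 + ∫ s in 0..t, u' s) (hu_end : u L = u 0)
    (hu_norm : ∫ s in 0..L, (‖u s‖ ^ 2 + ‖u' s‖ ^ 2) ≤ 1) :
    ‖∑ i : Fin N, c i * ∫ s in x i.castSucc..x i.succ, (starRingEnd ℂ) (u s)‖
      ∈ Hm1Set L x c := by
  have hu'_int : IntervalIntegrable u' volume 0 L :=
    (intervalIntegrable_iff_integrableOn_Ioo_of_le hL.le).2 (hu'.integrable one_le_two)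
  obtain ⟨θ, θ', θ_periodic, θ_cont, θ_ftc, θ_eq, θ'_eq⟩ :=
    exists_periodic_extension hL hu'_int hu hu_end
  refine ⟨θ, θ', θ_periodic, fun a b _ => θ_ftc a b, ?_, ?_, ?_, ?_⟩
  · refine (memLp_two_iff_integrable_sq_norm θ_cont.aestronglyMeasurable).2 ?_
    exact (θ_cont.norm.pow 2).integrableOn_Icc.mono_set Ioo_subset_Icc_self
  · exact hu'.ae_eq <| ae_restrict_of_forall_mem measurableSet_Ioo
      fun s hs => (θ'_eq (Ioo_subset_Ico_self hs)).symm
  · refine (intervalIntegral.integral_congr_Ioo_of_le hL.le fun s hs => ?_).trans_le hu_norm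
    simp only [θ_eq (Ioo_subset_Icc_self hs), θ'_eq (Ioo_subset_Ico_self hs)]
  · refine congrArg norm (Finset.sum_congr rfl fun i _ => congrArg (c i * ·) ?_)
    refine intervalIntegral.integral_congr_Ioo_of_le (hx i.castSucc_le_succ) fun s hs => ?_
    have hs_mem : s ∈ Icc 0 L :=
      ⟨hx_zero ▸ (hx (Fin.zero_le _)).trans hs.1.le, hx_last ▸ hs.2.le.trans (hx (Fin.le_last _))⟩
    simp only [θ_eq hs_mem]

end PeriodicExtension

section Bubble

/-- The quadratic bubble `(s - a) (b - s)` on `[a, b]`, extended by zero; for `a ≤ b` the product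
is nonpositive outside `[a, b]`, so the extension is the positive part. -/
noncomputable def bubble (a b s : ℝ) : ℝ := max 0 ((s - a) * (b - s))

/-- The right derivative of `bubble a b` when `a ≤ b`. It keeps the value `b - a` at `a` and drops
`a - b` at `b`, so that the fundamental theorem of calculus applies without exceptional points. -/
noncomputable def bubbleDeriv (a b : ℝ) : ℝ → ℝ := (Ico a b).indicator fun s => a + b - 2 * s

variable {a b s : ℝ}

lemma continuous_bubble (a b : ℝ) : Continuous (bubble a b) := by
  unfold bubble; fun_prop

lemma bubble_of_mem_Icc (hs : s ∈ Icc a b) : bubble a b s = (s - a) * (b - s) :=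
  max_eq_right (mul_nonneg (sub_nonneg.2 hs.1) (sub_nonneg.2 hs.2))

lemma bubble_of_le_left (hab : a ≤ b) (hs : s ≤ a) : bubble a b s = 0 :=
  max_eq_left (mul_nonpos_of_nonpos_of_nonneg (by linarith) (by linarith))

lemma bubble_of_right_le (hab : a ≤ b) (hs : b ≤ s) : bubble a b s = 0 :=
  max_eq_left (mul_nonpos_of_nonneg_of_nonpos (by linarith) (by linarith))

lemma bubble_of_notMem_Ico (hab : a ≤ b) (hs : s ∉ Ico a b) : bubble a b s = 0 := by
  rcases lt_or_ge s a with hsa | has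
  · exact bubble_of_le_left hab hsa.le
  · exact bubble_of_right_le hab (not_lt.1 fun hsb => hs ⟨has, hsb⟩)

lemma bubbleDeriv_of_mem_Ico (hs : s ∈ Ico a b) : bubbleDeriv a b s = a + b - 2 * s :=
  indicator_of_mem hs _

lemma bubbleDeriv_of_notMem_Ico (hs : s ∉ Ico a b) : bubbleDeriv a b s = 0 :=
  indicator_of_notMem hs _

lemma hasDerivWithinAt_bubble (hab : a ≤ b) (s : ℝ) :
    HasDerivWithinAt (bubble a b) (bubbleDeriv a b s) (Ioi s) s := by
  by_cases hs : s ∈ Ico a b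
  · have hpoly : HasDerivAt (fun t => (t - a) * (b - t)) (a + b - 2 * s) s :=
      (((hasDerivAt_id' s).sub_const a).mul ((hasDerivAt_id' s).const_sub b)).congr_deriv (by ring)
    rw [bubbleDeriv_of_mem_Ico hs]
    refine hpoly.hasDerivWithinAt.congr_of_eventuallyEq ?_
      (bubble_of_mem_Icc (Ico_subset_Icc_self hs))
    filter_upwards [Ioo_mem_nhdsGT hs.2] with t ht
    exact bubble_of_mem_Icc ⟨hs.1.trans ht.1.le, ht.2.le⟩
  · rw [bubbleDeriv_of_notMem_Ico hs]
    refine (hasDerivWithinAt_const s _ (0 : ℝ)).congr_of_eventuallyEq ?_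
      (bubble_of_notMem_Ico hab hs)
    rcases lt_or_ge s a with hsa | has
    · filter_upwards [Ioo_mem_nhdsGT hsa] with t ht
      exact bubble_of_le_left hab ht.2.le
    · filter_upwards [self_mem_nhdsWithin] with t ht
      exact bubble_of_right_le hab ((not_lt.1 fun hsb => hs ⟨has, hsb⟩).trans (le_of_lt ht))

lemma memLp_bubbleDeriv (a b : ℝ) (p : ENNReal) (μ : Measure ℝ) [IsFiniteMeasure μ] :
    MemLp (bubbleDeriv a b) p μ := by
  have hmeas : Measurable (bubbleDeriv a b) :=
    Measurable.indicator (by fun_prop) measurableSet_Ico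
  refine .of_bound hmeas.aestronglyMeasurable |b - a| (.of_forall fun s => ?_)
  by_cases hs : s ∈ Ico a b
  · rw [bubbleDeriv_of_mem_Ico hs, Real.norm_eq_abs, abs_le]
    constructor <;> linarith [hs.1, hs.2, le_abs_self (b - a)]
  · rw [bubbleDeriv_of_notMem_Ico hs, norm_zero]
    exact abs_nonneg _

lemma integral_sub_left_pow (a b : ℝ) (n : ℕ) :
    ∫ s in a..b, (s - a) ^ n = (b - a) ^ (n + 1) / (n + 1) := by
  rw [intervalIntegral.integral_comp_sub_right (fun t => t ^ n) a, integral_pow, sub_self,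
    zero_pow n.succ_ne_zero, sub_zero]

lemma integral_mul_sub_sub (a b : ℝ) :
    ∫ s in a..b, (s - a) * (b - s) = (b - a) ^ 3 / 6 := by
  calc ∫ s in a..b, (s - a) * (b - s)
      = ∫ s in a..b, ((b - a) * (s - a) ^ 1 - (s - a) ^ 2) := by
        congr with s; ring
    _ = (b - a) * ((b - a) ^ 2 / 2) - (b - a) ^ 3 / 3 := by
        rw [intervalIntegral.integral_sub (Continuous.intervalIntegrable (by fun_prop) _ _)
          (Continuous.intervalIntegrable (by fun_prop) _ _), intervalIntegral.integral_const_mul,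
          integral_sub_left_pow, integral_sub_left_pow]
        norm_num
    _ = (b - a) ^ 3 / 6 := by ring

lemma integral_sq_mul_sub_sub (a b : ℝ) :
    ∫ s in a..b, ((s - a) * (b - s)) ^ 2 = (b - a) ^ 5 / 30 := by
  calc ∫ s in a..b, ((s - a) * (b - s)) ^ 2
      = ∫ s in a..b, ((b - a) ^ 2 * (s - a) ^ 2 - 2 * (b - a) * (s - a) ^ 3 + (s - a) ^ 4) := by
        congr with s; ring
    _ = (b - a) ^ 2 * ((b - a) ^ 3 / 3) - 2 * (b - a) * ((b - a) ^ 4 / 4) + (b - a) ^ 5 / 5 := by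
        rw [intervalIntegral.integral_add (Continuous.intervalIntegrable (by fun_prop) _ _)
          (Continuous.intervalIntegrable (by fun_prop) _ _),
          intervalIntegral.integral_sub (Continuous.intervalIntegrable (by fun_prop) _ _)
          (Continuous.intervalIntegrable (by fun_prop) _ _)]
        simp only [intervalIntegral.integral_const_mul, integral_sub_left_pow]
        norm_num
    _ = (b - a) ^ 5 / 30 := by ring

lemma integral_sq_add_sub_two_mul (a b : ℝ) :
    ∫ s in a..b, (a + b - 2 * s) ^ 2 = (b - a) ^ 3 / 3 := by
  rw [intervalIntegral.integral_comp_sub_mul (fun t => t ^ 2) two_ne_zero (a + b), integral_pow,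
    smul_eq_mul]
  norm_num
  ring

end Bubble

section BubbleSum

variable {N : ℕ} {x : Fin (N + 1) → ℝ}

/-- The continuous function equal to `d i` times the quadratic bubble on the `i`-th element of the
partition `x`: the test function against which piecewise constants are paired. -/
noncomputable def bubbleSum (x : Fin (N + 1) → ℝ) (d : Fin N → ℂ) (s : ℝ) : ℂ :=
  ∑ i, d i * (bubble (x i.castSucc) (x i.succ) s : ℂ)

/-- The right derivative of `bubbleSum x d` for monotone `x`, serving as its weak derivative. -/
noncomputable def bubbleSumDeriv (x : Fin (N + 1) → ℝ) (d : Fin N → ℂ) (s : ℝ) : ℂ :=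
  ∑ i, d i * (bubbleDeriv (x i.castSucc) (x i.succ) s : ℂ)

lemma continuous_bubbleSum (x : Fin (N + 1) → ℝ) (d : Fin N → ℂ) : Continuous (bubbleSum x d) :=
  continuous_finsetSum _ fun _ _ =>
    continuous_const.mul (Complex.continuous_ofReal.comp (continuous_bubble _ _))

lemma memLp_bubbleSumDeriv (x : Fin (N + 1) → ℝ) (d : Fin N → ℂ) (p : ENNReal) (μ : Measure ℝ)
    [IsFiniteMeasure μ] : MemLp (bubbleSumDeriv x d) p μ :=
  memLp_finsetSum _ fun i _ => (memLp_bubbleDeriv _ _ p μ).ofReal.const_mul (d i)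

lemma hasDerivWithinAt_bubbleSum (hx : Monotone x) (d : Fin N → ℂ) (s : ℝ) :
    HasDerivWithinAt (bubbleSum x d) (bubbleSumDeriv x d s) (Ioi s) s :=
  .fun_sum fun i _ =>
    (hasDerivWithinAt_bubble (hx i.castSucc_le_succ) s).ofReal_comp.const_mul (d i)

lemma intervalIntegrable_bubbleSumDeriv (x : Fin (N + 1) → ℝ) (d : Fin N → ℂ) (a b : ℝ) :
    IntervalIntegrable (bubbleSumDeriv x d) volume a b :=
  ⟨(memLp_bubbleSumDeriv x d 1 _).integrable le_rfl,
    (memLp_bubbleSumDeriv x d 1 _).integrable le_rfl⟩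

lemma integral_bubbleSumDeriv (hx : Monotone x) (d : Fin N → ℂ) (a b : ℝ) :
    ∫ s in a..b, bubbleSumDeriv x d s = bubbleSum x d b - bubbleSum x d a :=
  intervalIntegral.integral_eq_sub_of_hasDeriv_right (continuous_bubbleSum x d).continuousOn
    (fun s _ => hasDerivWithinAt_bubbleSum hx d s)
    (intervalIntegrable_bubbleSumDeriv x d a b)

lemma bubbleSum_zero (hx : Monotone x) (d : Fin N → ℂ) : bubbleSum x d (x 0) = 0 :=
  Finset.sum_eq_zero fun i _ => by
    rw [bubble_of_le_left (hx i.castSucc_le_succ) (hx (Fin.zero_le _)), Complex.ofReal_zero,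
      mul_zero]

lemma bubbleSum_last (hx : Monotone x) (d : Fin N → ℂ) : bubbleSum x d (x (Fin.last N)) = 0 :=
  Finset.sum_eq_zero fun i _ => by
    rw [bubble_of_right_le (hx i.castSucc_le_succ) (hx (Fin.le_last _)), Complex.ofReal_zero,
      mul_zero]

lemma bubbleSum_of_mem_Ico (hx : Monotone x) (d : Fin N → ℂ) {i : Fin N} {s : ℝ}
    (hs : s ∈ Ico (x i.castSucc) (x i.succ)) :
    bubbleSum x d s = d i * ((s - x i.castSucc) * (x i.succ - s) : ℝ) := by
  rw [← bubble_of_mem_Icc (Ico_subset_Icc_self hs)]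
  refine sum_eq_of_mem_Ico_castSucc_succ hx (fun j hj => ?_) hs
  rw [bubble_of_notMem_Ico (hx j.castSucc_le_succ) hj, Complex.ofReal_zero, mul_zero]

lemma bubbleSumDeriv_of_mem_Ico (hx : Monotone x) (d : Fin N → ℂ) {i : Fin N} {s : ℝ}
    (hs : s ∈ Ico (x i.castSucc) (x i.succ)) :
    bubbleSumDeriv x d s = d i * (x i.castSucc + x i.succ - 2 * s : ℝ) := by
  rw [← bubbleDeriv_of_mem_Ico hs]
  refine sum_eq_of_mem_Ico_castSucc_succ hx (fun j hj => ?_) hs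
  rw [bubbleDeriv_of_notMem_Ico hj, Complex.ofReal_zero, mul_zero]

lemma integral_conj_bubbleSum (hx : Monotone x) (d : Fin N → ℂ) (i : Fin N) :
    ∫ s in x i.castSucc..x i.succ, (starRingEnd ℂ) (bubbleSum x d s) =
      (starRingEnd ℂ) (d i) * ((x i.succ - x i.castSucc) ^ 3 / 6 : ℝ) := by
  calc ∫ s in x i.castSucc..x i.succ, (starRingEnd ℂ) (bubbleSum x d s)
      = ∫ s in x i.castSucc..x i.succ,
          (starRingEnd ℂ) (d i) * ((s - x i.castSucc) * (x i.succ - s) : ℝ) := by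
        refine intervalIntegral.integral_congr_Ioo_of_le (hx i.castSucc_le_succ) fun s hs => ?_
        simp only [bubbleSum_of_mem_Ico hx d (Ioo_subset_Ico_self hs), map_mul, Complex.conj_ofReal]
    _ = (starRingEnd ℂ) (d i) * ((x i.succ - x i.castSucc) ^ 3 / 6 : ℝ) := by
        rw [intervalIntegral.integral_const_mul, intervalIntegral.integral_ofReal,
          integral_mul_sub_sub]

lemma intervalIntegrable_norm_sq_bubbleSum (x : Fin (N + 1) → ℝ) (d : Fin N → ℂ) (a b : ℝ) :
    IntervalIntegrable (fun s => ‖bubbleSum x d s‖ ^ 2 + ‖bubbleSumDeriv x d s‖ ^ 2) volume a b :=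
  (((continuous_bubbleSum x d).norm.pow 2).intervalIntegrable a b).add <|
    ⟨(memLp_bubbleSumDeriv x d 2 _).norm.integrable_sq,
      (memLp_bubbleSumDeriv x d 2 _).norm.integrable_sq⟩

lemma integral_norm_sq_bubbleSum (hx : Monotone x) (d : Fin N → ℂ) :
    ∫ s in x 0..x (Fin.last N), (‖bubbleSum x d s‖ ^ 2 + ‖bubbleSumDeriv x d s‖ ^ 2) =
      ∑ i, ‖d i‖ ^ 2 *
        ((x i.succ - x i.castSucc) ^ 5 / 30 + (x i.succ - x i.castSucc) ^ 3 / 3) := by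
  rw [← sum_integral_castSucc_succ fun i => intervalIntegrable_norm_sq_bubbleSum x d _ _]
  refine Finset.sum_congr rfl fun i _ => ?_
  set a := x i.castSucc
  set b := x i.succ
  calc ∫ s in a..b, (‖bubbleSum x d s‖ ^ 2 + ‖bubbleSumDeriv x d s‖ ^ 2)
      = ∫ s in a..b, ‖d i‖ ^ 2 * (((s - a) * (b - s)) ^ 2 + (a + b - 2 * s) ^ 2) := by
        refine intervalIntegral.integral_congr_Ioo_of_le (hx i.castSucc_le_succ) fun s hs => ?_
        simp only [bubbleSum_of_mem_Ico hx d (Ioo_subset_Ico_self hs),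
          bubbleSumDeriv_of_mem_Ico hx d (Ioo_subset_Ico_self hs), norm_mul, Complex.norm_real,
          mul_pow, Real.norm_eq_abs, sq_abs, mul_add, a, b]
    _ = ‖d i‖ ^ 2 * ((b - a) ^ 5 / 30 + (b - a) ^ 3 / 3) := by
        rw [intervalIntegral.integral_const_mul, intervalIntegral.integral_add
          (Continuous.intervalIntegrable (by fun_prop) _ _)
          (Continuous.intervalIntegrable (by fun_prop) _ _), integral_sq_mul_sub_sub,
          integral_sq_add_sub_two_mul]

end BubbleSum

section InverseInequality

variable {L : ℝ} {N : ℕ} {x : Fin (N + 1) → ℝ}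

lemma integral_norm_sq_bubbleSum_le (hx : Monotone x) (d : Fin N → ℂ) :
    ∫ s in x 0..x (Fin.last N), (‖bubbleSum x d s‖ ^ 2 + ‖bubbleSumDeriv x d s‖ ^ 2) ≤
      ((x (Fin.last N) - x 0) ^ 2 / 30 + 1 / 3) *
        ∑ i, ‖d i‖ ^ 2 * (x i.succ - x i.castSucc) ^ 3 := by
  rw [integral_norm_sq_bubbleSum hx, Finset.mul_sum]
  refine Finset.sum_le_sum fun i _ => ?_
  have length_nonneg : 0 ≤ x i.succ - x i.castSucc := sub_nonneg.2 (hx i.castSucc_le_succ)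
  have length_le : x i.succ - x i.castSucc ≤ x (Fin.last N) - x 0 :=
    sub_le_sub (hx (Fin.le_last _)) (hx (Fin.zero_le _))
  calc ‖d i‖ ^ 2 * ((x i.succ - x i.castSucc) ^ 5 / 30 + (x i.succ - x i.castSucc) ^ 3 / 3)
      = ((x i.succ - x i.castSucc) ^ 2 / 30 + 1 / 3) *
          (‖d i‖ ^ 2 * (x i.succ - x i.castSucc) ^ 3) := by ring
    _ ≤ ((x (Fin.last N) - x 0) ^ 2 / 30 + 1 / 3) *
          (‖d i‖ ^ 2 * (x i.succ - x i.castSucc) ^ 3) := by gcongr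

lemma norm_sum_mul_conj_mul_length_cube_le (hL : 0 < L) (hx : Monotone x) (hx_zero : x 0 = 0)
    (hx_last : x (Fin.last N) = L) (c : Fin N → ℂ) {B : ℝ} (hB : B ∈ upperBounds (Hm1Set L x c))
    (d : Fin N → ℂ)
    (hd : (L ^ 2 / 30 + 1 / 3) * ∑ i, ‖d i‖ ^ 2 * (x i.succ - x i.castSucc) ^ 3 ≤ 1) :
    ‖∑ i, c i * ((starRingEnd ℂ) (d i) * ((x i.succ - x i.castSucc) ^ 3 / 6 : ℝ))‖ ≤ B := by
  have hnorm : ∫ s in 0..L, (‖bubbleSum x d s‖ ^ 2 + ‖bubbleSumDeriv x d s‖ ^ 2) ≤ 1 := by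
    simpa only [hx_zero, hx_last, sub_zero] using
      (integral_norm_sq_bubbleSum_le hx d).trans (by rwa [hx_zero, hx_last, sub_zero])
  have hmem := norm_sum_integral_conj_mem_Hm1Set hL hx hx_zero hx_last c
    (memLp_bubbleSumDeriv x d 2 _)
    (fun t _ => by rw [integral_bubbleSumDeriv hx d 0 t, add_sub_cancel])
    (by rw [← hx_last, bubbleSum_last hx, ← hx_zero, bubbleSum_zero hx]) hnorm
  simpa only [integral_conj_bubbleSum hx] using hB hmem

theorem sqrt_sum_norm_sq_mul_length_cube_le (hL : 0 < L) (hx : Monotone x) (hx_zero : x 0 = 0)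
    (hx_last : x (Fin.last N) = L) (c : Fin N → ℂ) {B : ℝ} (hB : B ∈ upperBounds (Hm1Set L x c)) :
    √(∑ i, ‖c i‖ ^ 2 * (x i.succ - x i.castSucc) ^ 3) ≤ 6 * √(L ^ 2 / 30 + 1 / 3) * B := by
  set W := ∑ i, ‖c i‖ ^ 2 * (x i.succ - x i.castSucc) ^ 3
  set K := L ^ 2 / 30 + 1 / 3
  have hK : 0 < K := by positivity
  have hW : 0 ≤ W := Finset.sum_nonneg fun i _ =>
    mul_nonneg (sq_nonneg _) (pow_nonneg (sub_nonneg.2 (hx i.castSucc_le_succ)) 3)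
  -- Normalizes `c` to `K * (r ^ 2 * W) = 1`; if `W = 0`, then `r = 0`, which serves as well.
  let r := (√K * √W)⁻¹
  have henergy : K * ∑ i, ‖r * c i‖ ^ 2 * (x i.succ - x i.castSucc) ^ 3 ≤ 1 := by
    calc K * ∑ i, ‖r * c i‖ ^ 2 * (x i.succ - x i.castSucc) ^ 3
        = K * (r ^ 2 * W) := by
          simp only [W, norm_mul, Complex.norm_real, mul_pow, Real.norm_eq_abs, sq_abs, mul_assoc,
            Finset.mul_sum]
      _ = K * W / (K * W) := by
          rw [inv_pow, mul_pow, Real.sq_sqrt hK.le, Real.sq_sqrt hW]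
          ring
      _ ≤ 1 := div_self_le_one _
  have hpairing : ∑ i, c i * ((starRingEnd ℂ) (r * c i) *
      ((x i.succ - x i.castSucc) ^ 3 / 6 : ℝ)) = (r / 6 * W : ℝ) := by
    rw [Finset.mul_sum, Complex.ofReal_sum]
    refine Finset.sum_congr rfl fun i _ => ?_
    rw [map_mul, Complex.conj_ofReal]
    push_cast
    rw [← Complex.mul_conj']
    ring
  have hdual := norm_sum_mul_conj_mul_length_cube_le hL hx hx_zero hx_last c hB _ henergy
  rw [hpairing, Complex.norm_real] at hdual
  calc √W = W / √W := Real.div_sqrt.symm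
    _ = 6 * √K * (r / 6 * W) := by
        simp only [r]
        field_simp
    _ ≤ 6 * √K * B := by
        gcongr
        exact (Real.le_norm_self _).trans hdual

end InverseInequality

theorem stmt_11_general (L : ℝ) (hL : 0 < L) :
    ∃ C > 0, ∀ (N : ℕ) (x : Fin (N + 1) → ℝ), StrictMono x → x 0 = 0 → x (Fin.last N) = L →
      ∀ δ > 0, (∀ i : Fin N, δ ≤ x i.succ - x i.castSucc) →
      ∀ (cv : Fin N → ℂ) (nrm : ℝ), IsLUB (Hm1Set L x cv) nrm →
        √(∑ i : Fin N, ‖cv i‖ ^ 2 * (x i.succ - x i.castSucc)) ≤ C / δ * nrm := by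
  refine ⟨6 * √(L ^ 2 / 30 + 1 / 3), by positivity, ?_⟩
  intro N x hx hx_zero hx_last δ hδ hδ_le cv nrm hnrm
  set S := ∑ i : Fin N, ‖cv i‖ ^ 2 * (x i.succ - x i.castSucc)
  have hweight : δ ^ 2 * S ≤ ∑ i : Fin N, ‖cv i‖ ^ 2 * (x i.succ - x i.castSucc) ^ 3 := by
    rw [Finset.mul_sum]
    refine Finset.sum_le_sum fun i _ => ?_
    have length_nonneg : 0 ≤ x i.succ - x i.castSucc := hδ.le.trans (hδ_le i)
    calc δ ^ 2 * (‖cv i‖ ^ 2 * (x i.succ - x i.castSucc))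
        ≤ (x i.succ - x i.castSucc) ^ 2 * (‖cv i‖ ^ 2 * (x i.succ - x i.castSucc)) := by
          gcongr; exact hδ_le i
      _ = ‖cv i‖ ^ 2 * (x i.succ - x i.castSucc) ^ 3 := by ring
  rw [div_mul_eq_mul_div, le_div_iff₀' hδ]
  calc δ * √S = √(δ ^ 2 * S) := by rw [Real.sqrt_mul (sq_nonneg δ), Real.sqrt_sq hδ.le]
    _ ≤ √(∑ i : Fin N, ‖cv i‖ ^ 2 * (x i.succ - x i.castSucc) ^ 3) := Real.sqrt_le_sqrt hweight
    _ ≤ 6 * √(L ^ 2 / 30 + 1 / 3) * nrm :=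
        sqrt_sum_norm_sq_mul_length_cube_le hL hx.monotone hx_zero hx_last cv hnrm.1

/-- There is a constant `C > 0` depending only on `L` and the
quasi-uniformity constants `C₁, C₂` such that for every quasi-uniform partition of `Γ`
(`C₁ h ≤ l_i ≤ C₂ h`, `h = max_i l_i`) and every piecewise constant `σ ∈ M` (values `cv`),
`‖σ‖_{L²(0,L)} ≤ C h⁻¹ ‖σ‖_{H^{−1}(Γ)}`, where `‖σ‖²_{L²(0,L)} = ∑ i, |cv_i|² l_i` and
`‖σ‖_{H^{−1}(Γ)}` is the least upper bound `nrm` of `Hm1Set`. -/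
theorem stmt_11 (L C₁ C₂ : ℝ) (hL : 0 < L) (hC₁ : 0 < C₁) (hC₂ : 0 < C₂) :
    ∃ C > 0, ∀ (N : ℕ), 2 ≤ N →
      ∀ (x : Fin (N + 1) → ℝ), StrictMono x → x 0 = 0 → x (Fin.last N) = L →
      ∀ h : ℝ, IsGreatest (Set.range fun i : Fin N => x i.succ - x i.castSucc) h →
      (∀ i : Fin N, C₁ * h ≤ x i.succ - x i.castSucc ∧ x i.succ - x i.castSucc ≤ C₂ * h) →
      ∀ (cv : Fin N → ℂ) (nrm : ℝ), IsLUB (Hm1Set L x cv) nrm →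
        Real.sqrt (∑ i : Fin N, ‖cv i‖ ^ 2 * (x i.succ - x i.castSucc)) ≤ C / h * nrm := by
  obtain ⟨C, hC, hbound⟩ := stmt_11_general L hL
  refine ⟨C / C₁, by positivity, fun N _ x hx hx_zero hx_last h hmax hquasi cv nrm hnrm => ?_⟩
  obtain ⟨i, hi⟩ := hmax.1
  have h_pos : 0 < h := hi ▸ sub_pos.2 (hx i.castSucc_lt_succ)
  simpa only [div_div] using hbound N x hx hx_zero hx_last (C₁ * h) (mul_pos hC₁ h_pos)
    (fun i => (hquasi i).1) cv nrm hnrm
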